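/- Let H be the graph obtained from the complete bipartite graph K_{2,3} by subdividing every edge once. Then H is a partial 2-tree, and H has no outer-string representation: there is no assignment of an arc to each vertex of H such that the images of the arcs of distinct vertices intersect if and only if the vertices are adjacent, every intersection point of two arcs is a proper crossing, no point of ℝ² lies on the images of three distinct arcs, and every arc has at least one of its endpoints in the closure of the contour of the family of arcs. -/

import Mathlib

/-- An arc: an injective continuous map from `[0,1]` to `ℝ²`
(formalized as a map `ℝ → ℝ × ℝ` that is continuous and injective on `[0,1]`). -/
structure Arc where
  toFun : ℝ → ℝ × ℝ
  contOn : ContinuousOn toFun (Set.Icc 0 1)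
  injOn : Set.InjOn toFun (Set.Icc 0 1)

/-- The image of an arc. -/
def Arc.img (γ : Arc) : Set (ℝ × ℝ) := γ.toFun '' Set.Icc 0 1

/-- The endpoints of an arc. -/
def Arc.ends (γ : Arc) : Set (ℝ × ℝ) := {γ.toFun 0, γ.toFun 1}

/-- Two arcs cross properly at `q`: `q` is an interior point of both arcs, and there is
an open neighbourhood of `q` mapped homeomorphically onto the open unit disk with `q ↦ 0`,
taking the first arc to the horizontal diameter and the second to the vertical diameter. -/
def CrossesProperlyAt (γ₁ γ₂ : Arc) (q : ℝ × ℝ) : Prop :=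
  (∃ s ∈ Set.Ioo (0:ℝ) 1, γ₁.toFun s = q) ∧
  (∃ t ∈ Set.Ioo (0:ℝ) 1, γ₂.toFun t = q) ∧
  ∃ h : PartialHomeomorph (ℝ × ℝ) (ℝ × ℝ),
    q ∈ h.source ∧ h.target = Metric.ball (0 : ℝ × ℝ) 1 ∧ h q = 0 ∧
    h '' (h.source ∩ γ₁.img) = {z : ℝ × ℝ | z ∈ Metric.ball (0 : ℝ × ℝ) 1 ∧ z.2 = 0} ∧
    h '' (h.source ∩ γ₂.img) = {z : ℝ × ℝ | z ∈ Metric.ball (0 : ℝ × ℝ) 1 ∧ z.1 = 0}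

/-- A 1-string representation of a simple graph `G`. -/
structure OneStringRep {V : Type} (G : SimpleGraph V) where
  γ : V → Arc
  adj_inter : ∀ u v : V, G.Adj u v → ∃ q : ℝ × ℝ, (γ u).img ∩ (γ v).img = {q}
  nonadj_disjoint : ∀ u v : V, u ≠ v → ¬G.Adj u v → (γ u).img ∩ (γ v).img = ∅
  proper : ∀ u v : V, u ≠ v → ∀ q ∈ (γ u).img ∩ (γ v).img, CrossesProperlyAt (γ u) (γ v) q
  no_triple : ∀ u v w : V, u ≠ v → u ≠ w → v ≠ w → (γ u).img ∩ (γ v).img ∩ (γ w).img = ∅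

/-- A straight-line plane drawing of a simple graph. -/
def IsPlaneDrawing {V : Type} (G : SimpleGraph V) (p : V → ℝ × ℝ) : Prop :=
  Function.Injective p ∧
  (∀ u v x y : V, G.Adj u v → G.Adj x y → u ≠ x → u ≠ y → v ≠ x → v ≠ y →
    segment ℝ (p u) (p v) ∩ segment ℝ (p x) (p y) = ∅) ∧
  (∀ u v w : V, G.Adj u v → G.Adj u w → v ≠ w →
    segment ℝ (p u) (p v) ∩ segment ℝ (p u) (p w) = {p u}) ∧
  (∀ u v w : V, G.Adj u v → w ≠ u → w ≠ v → p w ∉ segment ℝ (p u) (p v))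

/-- The angle of the vector from `a` to `b`. -/
noncomputable def angleAt (a b : ℝ × ℝ) : ℝ := Complex.arg ⟨b.1 - a.1, b.2 - a.2⟩

/-- A 1-string representation is order-preserving w.r.t. a straight-line plane drawing `p`:
for each vertex `v`, listing the neighbours `w₁, …, w_k` sorted by the angle of `p wᵢ - p v`,
there are a traversal direction of `γ v` and a cyclic rotation of the list such that the
intersection points of `γ v` with the `γ wᵢ` occur along `γ v`, in that traversal direction,
exactly in the rotated order. -/
def OrderPreserving {V : Type} (G : SimpleGraph V) (p : V → ℝ × ℝ)
    (R : OneStringRep G) : Prop :=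
  ∀ v : V, ∃ l : List V,
    l.Nodup ∧ (∀ w : V, w ∈ l ↔ G.Adj v w) ∧
    l.Pairwise (fun w w' => angleAt (p v) (p w) < angleAt (p v) (p w')) ∧
    ∃ (r : ℕ) (dir : Bool) (t : V → ℝ),
      (∀ w ∈ l, t w ∈ Set.Icc (0:ℝ) 1 ∧ (R.γ v).toFun (t w) ∈ (R.γ w).img) ∧
      (l.rotate r).Pairwise (fun w w' => if dir then t w < t w' else t w' < t w)

/-- The union of the images of a family of arcs. -/
def arcUnion {V : Type} (γ : V → Arc) : Set (ℝ × ℝ) := ⋃ v, (γ v).img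

/-- The contour of a family of arcs: the unbounded connected component of the complement of
the union of the images (formalized as the union of all unbounded connected components). -/
def contour {V : Type} (γ : V → Arc) : Set (ℝ × ℝ) :=
  {x | x ∈ (arcUnion γ)ᶜ ∧ ¬ Bornology.IsBounded (connectedComponentIn (arcUnion γ)ᶜ x)}

/-- A `k`-tree: there is an ordering of the vertices such that the first `k` form a clique and
every later vertex has exactly `k` earlier neighbours, which form a clique. -/
def IsKTree {V : Type} (k : ℕ) (G : SimpleGraph V) : Prop :=
  ∃ (n : ℕ) (e : V ≃ Fin n), k ≤ n ∧
    G.IsClique {v : V | (e v).val < k} ∧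
    ∀ i : Fin n, k ≤ i.val →
      ∃ S : Finset V, S.card = k ∧
        (∀ w : V, w ∈ S ↔ G.Adj (e.symm i) w ∧ (e w).val < i.val) ∧
        G.IsClique ↑S

/-- An L-shape: an arc whose image is the union of a vertical segment from `(x, y+h)` to
`(x, y)` and a horizontal segment from `(x, y)` to `(x+w, y)` with `w, h > 0`. -/
def IsLShape (γ : Arc) : Prop :=
  ∃ x y w h : ℝ, 0 < w ∧ 0 < h ∧
    γ.img = segment ℝ (x, y + h) (x, y) ∪ segment ℝ (x, y) (x + w, y)

/-- A 1-bend orthogonal arc: its image is a single horizontal or vertical segment, or the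
union of a horizontal segment and a vertical segment sharing exactly one endpoint. -/
def IsOneBendOrth (γ : Arc) : Prop :=
  (∃ a b : ℝ × ℝ, a ≠ b ∧ (a.1 = b.1 ∨ a.2 = b.2) ∧ γ.img = segment ℝ a b) ∨
  (∃ a b c : ℝ × ℝ, a ≠ b ∧ b ≠ c ∧
    ((a.1 = b.1 ∧ b.2 = c.2) ∨ (a.2 = b.2 ∧ b.1 = c.1)) ∧
    γ.img = segment ℝ a b ∪ segment ℝ b c ∧ segment ℝ a b ∩ segment ℝ b c = {b})

/-- A graph is 2-connected if it has at least 3 vertices and deleting any single vertex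
leaves a connected graph. -/
def TwoConnected {V : Type} (G : SimpleGraph V) : Prop :=
  3 ≤ Nat.card V ∧ ∀ v : V, ((⊤ : G.Subgraph).deleteVerts {v}).coe.Connected

/-- A partial 2-tree: a graph isomorphic to a subgraph of some 2-tree. -/
def IsPartialTwoTree {V : Type} (G : SimpleGraph V) : Prop :=
  ∃ (W : Type) (H : SimpleGraph W), IsKTree 2 H ∧
    ∃ g : V ↪ W, ∀ u v : V, G.Adj u v → H.Adj (g u) (g v)

/-- The graph obtained from `K_{2,3}` by subdividing every edge once: the left part is `Fin 2`,
the right part is `Fin 3`, and for each pair `(i, j)` there is a subdivision vertex adjacent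
exactly to the left vertex `i` and the right vertex `j`. -/
def subdividedK23 : SimpleGraph (Fin 2 ⊕ Fin 3 ⊕ Fin 2 × Fin 3) :=
  SimpleGraph.fromRel (fun a b =>
    match a, b with
    | Sum.inl i, Sum.inr (Sum.inr (i', _)) => i = i'
    | Sum.inr (Sum.inl j), Sum.inr (Sum.inr (_, j')) => j = j'
    | _, _ => False)

/-!
Contracting the outer region of the arcs to a point adds to the subdivided `K_{2,3}` a third left
vertex, which sees all three right arcs; the result would be a drawing of `K_{3,3}` in which
independent edges are disjoint.

No such drawing exists. Write `var p γ` for the change of `log (z - p)` along a path `γ`. If `e`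
from `x` to `y` and `f` from `x'` to `y'` are disjoint, then integrating `d log (f t - e s)` around
the unit square gives `var x f - var y f = var x' e - var y' e`. Sum these relations over the
independent edges between each two of the three left vertices. Cyclically, the terms at the right
vertices cancel, while the exponential of the remaining sum is a telescoping product times
`(-1) ^ 9`.
-/

open Set Bornology

section LogVariation

theorem exists_continuousMap_exp_eq {X : Type*} [TopologicalSpace X] [SimplyConnectedSpace X]
    [LocallyPathConnectedSpace X] (f : C(X, ℂ)) (hf : ∀ x, f x ≠ 0) :
    ∃ L : C(X, ℂ), ∀ x, Complex.exp (L x) = f x := by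
  obtain ⟨x₀⟩ : Nonempty X := inferInstance
  obtain ⟨L, ⟨-, hL⟩, -⟩ := Complex.isCoveringMapOn_exp.existsUnique_continuousMap_lifts f
    (Complex.exp_log (hf x₀)) hf
  exact ⟨L, congrFun hL⟩

theorem sub_eq_sub_of_exp_eq_exp {X : Type*} [TopologicalSpace X] [PreconnectedSpace X]
    {L M : C(X, ℂ)} (h : ∀ x, Complex.exp (L x) = Complex.exp (M x)) (x y : X) :
    L y - L x = M y - M x := by
  have hL : ⇑L = fun z ↦ M z + (L x - M x) := by
    refine Complex.isCoveringMap_exp.eq_of_comp_eq L.continuous (by fun_prop) ?_ x (by ring)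
    funext z
    simp [Complex.exp_add, Complex.exp_sub, h]
  rw [congrFun hL y]
  ring

/-- The total change along the path `γ` of a continuous branch of `log (z - p)`. For a loop this is
`2πi` times the winding number around `p`; the value is the junk `0` if `γ` passes through `p`. -/
noncomputable def logVariation {x y : ℂ} (p : ℂ) (γ : Path x y) : ℂ :=
  open Classical in
  if h : ∃ L : C(ℝ, ℂ), ∀ t, Complex.exp (L t) = γ.extend t - p then
    h.choose 1 - h.choose 0
  else 0

variable {x y x' y' p : ℂ}

theorem logVariation_eq_sub {γ : Path x y} {L : C(ℝ, ℂ)}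
    (hL : ∀ t, Complex.exp (L t) = γ.extend t - p) : logVariation p γ = L 1 - L 0 := by
  have h : ∃ L : C(ℝ, ℂ), ∀ t, Complex.exp (L t) = γ.extend t - p := ⟨L, hL⟩
  rw [logVariation, dif_pos h]
  exact sub_eq_sub_of_exp_eq_exp (fun t ↦ (h.choose_spec t).trans (hL t).symm) 0 1

theorem exp_logVariation {γ : Path x y} (hp : p ∉ range γ) :
    Complex.exp (logVariation p γ) = (y - p) / (x - p) := by
  rw [← γ.extend_range] at hp
  obtain ⟨L, hL⟩ := exists_continuousMap_exp_eq ⟨fun t ↦ γ.extend t - p, by fun_prop⟩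
    fun t ↦ sub_ne_zero.2 fun h ↦ hp ⟨t, h⟩
  rw [logVariation_eq_sub hL, Complex.exp_sub, hL, hL]
  simp

/- A continuous logarithm of `f t - e s` exists on the whole `(s, t)`-plane; its changes along the
four sides of the unit square add up to zero. -/
theorem logVariation_sub_logVariation_of_disjoint (e : Path x y) (f : Path x' y')
    (hef : Disjoint (range e) (range f)) :
    logVariation x f - logVariation y f = logVariation x' e - logVariation y' e := by
  rw [← e.extend_range, ← f.extend_range] at hef
  obtain ⟨L, hL⟩ := exists_continuousMap_exp_eq
    (⟨fun z ↦ f.extend z.2 - e.extend z.1, by fun_prop⟩ : C(ℝ × ℝ, ℂ))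
    fun z ↦ sub_ne_zero.2 (hef.ne_of_mem (mem_range_self z.1) (mem_range_self z.2)).symm
  have hL_neg (s t : ℝ) : Complex.exp (L (s, t) + Real.pi * Complex.I) =
      e.extend s - f.extend t := by
    simp [Complex.exp_add, Complex.exp_pi_mul_I, hL]
  rw [logVariation_eq_sub (p := x) (γ := f) (L := ⟨fun t ↦ L (0, t), by fun_prop⟩)
      (by simp [hL]),
    logVariation_eq_sub (p := y) (γ := f) (L := ⟨fun t ↦ L (1, t), by fun_prop⟩)
      (by simp [hL]),
    logVariation_eq_sub (p := x') (γ := e)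
      (L := ⟨fun s ↦ L (s, 0) + Real.pi * Complex.I, by fun_prop⟩) (by simp [hL_neg]),
    logVariation_eq_sub (p := y') (γ := e)
      (L := ⟨fun s ↦ L (s, 1) + Real.pi * Complex.I, by fun_prop⟩) (by simp [hL_neg])]
  simp only [ContinuousMap.coe_mk]
  ring

end LogVariation

section Stars

variable {x y : ℂ} {b : Fin 3 → ℂ}

/-- The sum of the log-variations of the rays of a three-armed star with centre `x` around
the leaves not on them. -/
noncomputable def leafVariation (P : ∀ j, Path x (b j)) : ℂ :=
  ∑ j, ∑ j' with j' ≠ j, logVariation (b j') (P j)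

/-- The sum of the log-variations around a point `p` of the rays of a three-armed star. -/
noncomputable def starVariation (p : ℂ) (P : ∀ j, Path x (b j)) : ℂ :=
  ∑ j, logVariation p (P j)

theorem two_mul_starVariation_sub_starVariation (P : ∀ j, Path x (b j)) (Q : ∀ j, Path y (b j))
    (hPQ : ∀ j j', j ≠ j' → Disjoint (range (P j)) (range (Q j'))) :
    2 * (starVariation x Q - starVariation y P) = leafVariation Q - leafVariation P := by
  have rel (j j' : Fin 3) (h : j ≠ j') :=
    logVariation_sub_logVariation_of_disjoint (P j) (Q j') (hPQ j j' h)
  simp only [starVariation, leafVariation, Fin.sum_univ_three, Finset.sum_filter, ne_eq, ite_not,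
    ↓reduceIte, one_ne_zero, zero_ne_one, zero_add, add_zero, Fin.reduceEq]
  linear_combination rel 0 1 (by decide) + rel 0 2 (by decide) + rel 1 0 (by decide) +
    rel 1 2 (by decide) + rel 2 0 (by decide) + rel 2 1 (by decide)

/- Each of the three leaves contributes the sign of `(x - y) / (y - x)`. -/
theorem exp_starVariation_sub_starVariation (P : ∀ j, Path x (b j)) (Q : ∀ j, Path y (b j))
    (hx : ∀ j, x ∉ range (Q j)) (hy : ∀ j, y ∉ range (P j)) :
    Complex.exp (starVariation x Q - starVariation y P) = -∏ j, (b j - x) / (b j - y) := by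
  have hyx : y - x ≠ 0 := sub_ne_zero.2 fun h ↦ hx 0 ⟨0, by simp [h]⟩
  have hby (j) : b j - y ≠ 0 := sub_ne_zero.2 fun h ↦ hy j ⟨1, by simp [h]⟩
  have factor (j) : (b j - x) / (y - x) / ((b j - y) / (x - y)) = -((b j - x) / (b j - y)) := by
    have := hby j
    field_simp
    ring
  simp only [starVariation, ← Finset.sum_sub_distrib, Complex.exp_sum, Complex.exp_sub,
    exp_logVariation (hx _), exp_logVariation (hy _), factor, Finset.prod_neg, Finset.card_univ,
    Fintype.card_fin, Odd.neg_one_pow (n := 3) (by decide), neg_one_mul]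

theorem exists_not_disjoint_range_path {a : Fin 3 → ℂ} (P : ∀ i j, Path (a i) (b j)) :
    ∃ i i' j j', i ≠ i' ∧ j ≠ j' ∧ ¬Disjoint (range (P i j)) (range (P i' j')) := by
  by_contra! hP
  have ha (i i' j) (hi : i ≠ i') : a i ∉ range (P i' j) := by
    obtain ⟨j', hj⟩ := exists_ne j
    exact (hP i i' j' j hi hj).notMem_of_mem_left ⟨0, by simp⟩
  have hba (i j) : b j - a i ≠ 0 := by
    obtain ⟨i', hi⟩ := exists_ne i
    exact sub_ne_zero.2 fun h ↦ ha i i' j hi.symm ⟨1, by simp [h]⟩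
  have two_mul (i i') (hi : i ≠ i') :=
    two_mul_starVariation_sub_starVariation (P i) (P i') fun j j' ↦ hP i i' j j' hi
  have exp_eq (i i') (hi : i ≠ i') := exp_starVariation_sub_starVariation (P i) (P i')
    (fun j ↦ ha i i' j hi) (fun j ↦ ha i' i j hi.symm)
  have sum_zero : (starVariation (a 0) (P 1) - starVariation (a 1) (P 0)) +
      (starVariation (a 1) (P 2) - starVariation (a 2) (P 1)) +
      (starVariation (a 2) (P 0) - starVariation (a 0) (P 2)) = 0 := by
    linear_combination (two_mul 0 1 (by decide) + two_mul 1 2 (by decide) +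
      two_mul 2 0 (by decide)) / 2
  have telescope (j) : (b j - a 0) / (b j - a 1) * ((b j - a 1) / (b j - a 2)) *
      ((b j - a 2) / (b j - a 0)) = 1 := by
    rw [div_mul_div_cancel₀ (hba 1 j), div_mul_div_cancel₀ (hba 2 j), div_self (hba 0 j)]
  have one_eq_neg_one : (1 : ℂ) = -1 := calc
    1 = (-∏ j, (b j - a 0) / (b j - a 1)) * (-∏ j, (b j - a 1) / (b j - a 2)) *
        (-∏ j, (b j - a 2) / (b j - a 0)) := by
      rw [← exp_eq 0 1 (by decide), ← exp_eq 1 2 (by decide), ← exp_eq 2 0 (by decide),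
        ← Complex.exp_add, ← Complex.exp_add, sum_zero, Complex.exp_zero]
    _ = -∏ j, (b j - a 0) / (b j - a 1) * ((b j - a 1) / (b j - a 2)) *
        ((b j - a 2) / (b j - a 0)) := by
      simp only [Finset.prod_mul_distrib]
      ring
    _ = -1 := by simp [telescope]
  norm_num at one_eq_neg_one

theorem exists_not_disjoint_of_joinedIn {ι κ : Type*} [Fintype ι] [Fintype κ]
    (hι : 3 ≤ Fintype.card ι) (hκ : 3 ≤ Fintype.card κ) {a : ι → ℝ × ℝ} {b : κ → ℝ × ℝ}
    {S : ι → κ → Set (ℝ × ℝ)} (hS : ∀ i j, JoinedIn (S i j) (a i) (b j)) :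
    ∃ i i' j j', i ≠ i' ∧ j ≠ j' ∧ ¬Disjoint (S i j) (S i' j') := by
  obtain ⟨f⟩ : Nonempty (Fin 3 ↪ ι) := Function.Embedding.nonempty_of_card_le (by simpa)
  obtain ⟨g⟩ : Nonempty (Fin 3 ↪ κ) := Function.Embedding.nonempty_of_card_le (by simpa)
  let toComplex := Complex.equivRealProdCLM.symm
  obtain ⟨i, i', j, j', hi, hj, hij⟩ := exists_not_disjoint_range_path fun i j ↦
    (hS (f i) (g j)).somePath.map toComplex.continuous
  obtain ⟨_, ⟨s, rfl⟩, ⟨t, hst⟩⟩ := not_disjoint_iff.1 hij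
  refine ⟨f i, f i', g j, g j', f.injective.ne hi, g.injective.ne hj, not_disjoint_iff.2
    ⟨_, (hS _ _).somePath_mem s, ?_⟩⟩
  rw [← toComplex.injective hst]
  exact (hS _ _).somePath_mem t

end Stars

section OuterRegion

/-- The union of the unbounded components of the complement of `K`, so that the contour of a family
of arcs is `outerRegion` of the union of their images. -/
def outerRegion {E : Type*} [TopologicalSpace E] [Bornology E] (K : Set E) : Set E :=
  {x | x ∈ Kᶜ ∧ ¬IsBounded (connectedComponentIn Kᶜ x)}

variable {E : Type*} [NormedAddCommGroup E] [NormedSpace ℝ E]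

theorem isPathConnected_setOf_lt_norm (hE : 1 < Module.rank ℝ E) {R : ℝ} (hR : 0 ≤ R) :
    IsPathConnected {x : E | R < ‖x‖} := by
  have h : IsPathConnected (Ioi R ×ˢ Metric.sphere (0 : E) 1) :=
    (convex_Ioi R).isPathConnected nonempty_Ioi |>.prod (isPathConnected_sphere hE 0 zero_le_one)
  convert h.image (f := fun p : ℝ × E ↦ p.1 • p.2) (by fun_prop) using 1
  ext x
  constructor
  · intro hx
    have hx₀ : ‖x‖ ≠ 0 := (hR.trans_lt hx).ne'
    exact ⟨(‖x‖, ‖x‖⁻¹ • x), ⟨hx, by simp [norm_smul, hx₀]⟩, smul_inv_smul₀ hx₀ x⟩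
  · rintro ⟨⟨r, u⟩, ⟨hr, hu⟩, rfl⟩
    have hr₀ : 0 ≤ r := hR.trans hr.le
    simpa [norm_smul, abs_of_nonneg hr₀, mem_sphere_zero_iff_norm.1 hu] using hr

theorem exists_outerRegion_eq_connectedComponentIn (hE : 1 < Module.rank ℝ E) {K : Set E}
    (hK : IsBounded K) : ∃ z ∈ Kᶜ, outerRegion K = connectedComponentIn Kᶜ z := by
  obtain ⟨R, hR, hKR⟩ := hK.exists_pos_norm_le
  have hext := isPathConnected_setOf_lt_norm hE hR.le
  have hext_sub : {x : E | R < ‖x‖} ⊆ Kᶜ := fun x hx hxK ↦ (hKR x hxK).not_gt hx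
  obtain ⟨z, hz⟩ := hext.nonempty
  have hext_comp : {x : E | R < ‖x‖} ⊆ connectedComponentIn Kᶜ z :=
    hext.isConnected.isPreconnected.subset_connectedComponentIn hz hext_sub
  have : Nontrivial E := (rank_pos_iff_nontrivial (R := ℝ)).1 (zero_lt_one.trans hE)
  have hunb : ¬IsBounded (connectedComponentIn Kᶜ z) := by
    intro hbdd
    obtain ⟨r, hr⟩ := hbdd.exists_norm_le
    obtain ⟨x, hx⟩ := NormedSpace.exists_lt_norm ℝ E (max R r)
    exact (hr x (hext_comp ((le_max_left R r).trans_lt hx))).not_gt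
      ((le_max_right R r).trans_lt hx)
  refine ⟨z, hext_sub hz, subset_antisymm (fun x ⟨hxK, hx⟩ ↦ ?_) fun x hx ↦
    ⟨connectedComponentIn_subset _ _ hx, connectedComponentIn_eq hx ▸ hunb⟩⟩
  obtain ⟨y, hyx, hy⟩ : ∃ y ∈ connectedComponentIn Kᶜ x, R < ‖y‖ := by
    by_contra! hle
    exact hx (isBounded_iff_forall_norm_le.2 ⟨R, hle⟩)
  rw [connectedComponentIn_eq (hext_comp hy), ← connectedComponentIn_eq hyx]
  exact mem_connectedComponentIn hxK

theorem isPathConnected_outerRegion (hE : 1 < Module.rank ℝ E) {K : Set E} (hKb : IsBounded K)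
    (hKc : IsClosed K) : IsPathConnected (outerRegion K) := by
  obtain ⟨z, hz, hK⟩ := exists_outerRegion_eq_connectedComponentIn hE hKb
  rw [hK, ← hKc.isOpen_compl.connectedComponentIn.isConnected_iff_isPathConnected]
  exact isConnected_connectedComponentIn_iff.2 hz

theorem joinedIn_of_mem_closure {X : Type*} [TopologicalSpace X] [LocallyPathConnectedSpace X]
    {C U : Set X} (hC : IsPathConnected C) (hU : IsOpen U) (hCU : C ⊆ U) {x p : X} (hx : x ∈ C)
    (hpC : p ∈ closure C) (hpU : p ∈ U) : JoinedIn U x p := by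
  obtain ⟨y, hpy, hy⟩ := mem_closure_iff_nhds.1 hpC _ (pathComponentIn_mem_nhds (hU.mem_nhds hpU))
  exact ((hC.joinedIn x hx y hy).mono hCU).trans hpy.symm

theorem joinedIn_compl_biUnion_disjoint {V : Type*} [Finite V] (hE : 1 < Module.rank ℝ E)
    {K : V → Set E} (hK : ∀ v, IsCompact (K v)) {v : V} {x p : E}
    (hx : x ∈ outerRegion (⋃ w, K w)) (hpv : p ∈ K v) (hp : p ∈ closure (outerRegion (⋃ w, K w))) :
    JoinedIn (⋃ w ∈ {w | Disjoint (K w) (K v)}, K w)ᶜ x p := by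
  have hcompact : IsCompact (⋃ w, K w) := isCompact_iUnion hK
  refine joinedIn_of_mem_closure
    (isPathConnected_outerRegion hE hcompact.isBounded hcompact.isClosed)
    ((toFinite _).isClosed_biUnion fun w _ ↦ (hK w).isClosed).isOpen_compl ?_ hx hp ?_
  · exact fun y hy ↦ notMem_subset (iUnion₂_subset_iUnion _ _) hy.1
  · simp only [mem_compl_iff, mem_iUnion, not_exists]
    exact fun w hw hpw ↦ disjoint_left.1 hw hpw hpv

end OuterRegion

section Arc

variable (γ : Arc)

theorem Arc.isCompact_img : IsCompact γ.img :=
  isCompact_Icc.image_of_continuousOn γ.contOn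

theorem Arc.isPathConnected_img : IsPathConnected γ.img :=
  ((convex_Icc (0 : ℝ) 1).isPathConnected (nonempty_Icc.2 zero_le_one)).image' γ.contOn

theorem Arc.toFun_zero_mem_img : γ.toFun 0 ∈ γ.img := mem_image_of_mem _ (by simp)

theorem Arc.toFun_one_mem_img : γ.toFun 1 ∈ γ.img := mem_image_of_mem _ (by simp)

end Arc

section KTree

theorem isKTree_fromRel {V : Type} {n k : ℕ} (hk : k ≤ n) (e : V ≃ Fin n) (parents : V → Finset V)
    (lt : ∀ v, ∀ u ∈ parents v, e u < e v)
    (base : ∀ u v, e u < e v → (e v).val < k → u ∈ parents v)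
    (card : ∀ v, k ≤ (e v).val → (parents v).card = k)
    (clique : ∀ v, k ≤ (e v).val → ∀ u ∈ parents v, ∀ w ∈ parents v, e u < e w → u ∈ parents w) :
    IsKTree k (SimpleGraph.fromRel fun v u ↦ u ∈ parents v) := by
  have adj_of_lt {S : Set V} (h : ∀ u ∈ S, ∀ w ∈ S, e u < e w → u ∈ parents w) :
      (SimpleGraph.fromRel fun v u ↦ u ∈ parents v).IsClique S := by
    intro u hu w hw huw
    rcases lt_or_gt_of_ne (e.injective.ne huw) with h' | h'
    · exact ⟨huw, .inr (h u hu w hw h')⟩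
    · exact ⟨huw, .inl (h w hw u hu h')⟩
  refine ⟨n, e, hk, adj_of_lt fun u _ w hw h ↦ base u w h hw, fun i hi ↦ ?_⟩
  obtain ⟨v, rfl⟩ := e.surjective i
  refine ⟨parents v, card v hi, fun w ↦ ?_, adj_of_lt (clique v hi)⟩
  rw [e.symm_apply_apply, SimpleGraph.fromRel_adj]
  exact ⟨fun hw ↦ ⟨⟨fun h ↦ (lt v w hw).ne (by rw [h]), .inl hw⟩, lt v w hw⟩,
    fun ⟨⟨_, h⟩, hlt⟩ ↦ h.resolve_right fun hv ↦ (lt w v hv).asymm hlt⟩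

/-- The parents of each vertex in a 2-tree containing the subdivided `K_{2,3}`: join the two left
vertices, glue each right vertex to that edge, and each subdivision vertex to the edge it
subdivides. -/
def twoTreeParents : Fin 2 ⊕ Fin 3 ⊕ Fin 2 × Fin 3 → Finset (Fin 2 ⊕ Fin 3 ⊕ Fin 2 × Fin 3)
  | .inl 0 => ∅
  | .inl 1 => {.inl 0}
  | .inr (.inl _) => {.inl 0, .inl 1}
  | .inr (.inr (i, j)) => {.inl i, .inr (.inl j)}

theorem isPartialTwoTree_subdividedK23 : IsPartialTwoTree subdividedK23 := by
  let e : Fin 2 ⊕ Fin 3 ⊕ Fin 2 × Fin 3 ≃ Fin (2 + (3 + 2 * 3)) :=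
    ((Equiv.refl _).sumCongr
      (((Equiv.refl _).sumCongr finProdFinEquiv).trans finSumFinEquiv)).trans finSumFinEquiv
  refine ⟨_, _, isKTree_fromRel (by decide) e twoTreeParents ?_ ?_ ?_ ?_, .refl _, ?_⟩
  · decide
  · decide
  · decide
  · decide
  · rintro (i | j | ⟨i, j⟩) (i' | j' | ⟨i', j'⟩) ⟨-, h⟩ <;>
      simp_all [twoTreeParents]

end KTree

section SubdividedK23

/-- The path of `subdividedK23` subdividing the edge from `i` to `j` of `K_{2,3}`. -/
def arm (i : Fin 2) (j : Fin 3) : Finset (Fin 2 ⊕ Fin 3 ⊕ Fin 2 × Fin 3) :=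
  {.inl i, .inr (.inr (i, j)), .inr (.inl j)}

theorem not_adj_of_mem_arm {i i' : Fin 2} {j j' : Fin 3} (hi : i ≠ i') (hj : j ≠ j')
    {u v : Fin 2 ⊕ Fin 3 ⊕ Fin 2 × Fin 3} (hu : u ∈ arm i j) (hv : v ∈ arm i' j') :
    u ≠ v ∧ ¬subdividedK23.Adj u v := by
  simp only [arm, Finset.mem_insert, Finset.mem_singleton] at hu hv
  rcases hu with rfl | rfl | rfl <;> rcases hv with rfl | rfl | rfl <;>
    simp [subdividedK23, hi, hj, hi.symm, hj.symm]

theorem disjoint_of_mem_arm {X : Type*} {K : Fin 2 ⊕ Fin 3 ⊕ Fin 2 × Fin 3 → Set X}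
    (hadj : ∀ u v, u ≠ v → (K u ∩ K v).Nonempty → subdividedK23.Adj u v) {i i' : Fin 2}
    {j j' : Fin 3} (hi : i ≠ i') (hj : j ≠ j') {u v : Fin 2 ⊕ Fin 3 ⊕ Fin 2 × Fin 3}
    (hu : u ∈ arm i j) (hv : v ∈ arm i' j') : Disjoint (K u) (K v) := by
  obtain ⟨huv, hnadj⟩ := not_adj_of_mem_arm hi hj hu hv
  rw [disjoint_iff_inter_eq_empty, ← not_nonempty_iff_eq_empty]
  exact fun h ↦ hnadj (hadj u v huv h)

theorem joinedIn_biUnion_arm {E : Type*} [TopologicalSpace E]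
    {K : Fin 2 ⊕ Fin 3 ⊕ Fin 2 × Fin 3 → Set E} (hK : ∀ v, IsPathConnected (K v))
    (hadj : ∀ u v, subdividedK23.Adj u v → (K u ∩ K v).Nonempty) {i : Fin 2} {j : Fin 3} {x y : E}
    (hx : x ∈ K (.inl i)) (hy : y ∈ K (.inr (.inl j))) : JoinedIn (⋃ v ∈ arm i j, K v) x y := by
  have hleft : (K (.inl i) ∩ K (.inr (.inr (i, j)))).Nonempty := hadj _ _ (by simp [subdividedK23])
  have hright : (K (.inr (.inr (i, j))) ∩ K (.inr (.inl j))).Nonempty :=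
    hadj _ _ (by simp [subdividedK23])
  have hunion : ⋃ v ∈ arm i j, K v = K (.inl i) ∪ (K (.inr (.inr (i, j))) ∪ K (.inr (.inl j))) := by
    simp only [arm, Finset.set_biUnion_insert, Finset.set_biUnion_singleton]
  rw [hunion]
  exact ((hK _).union ((hK _).union (hK _) hright)
    (hleft.mono (inter_subset_inter_right _ subset_union_left))).joinedIn x (.inl hx) y
    (.inr (.inr hy))

theorem exists_disjoint_closure_outerRegion {K : Fin 2 ⊕ Fin 3 ⊕ Fin 2 × Fin 3 → Set (ℝ × ℝ)}
    (hcompact : ∀ v, IsCompact (K v)) (hpath : ∀ v, IsPathConnected (K v))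
    (hadj : ∀ u v, u ≠ v → ((K u ∩ K v).Nonempty ↔ subdividedK23.Adj u v)) :
    ∃ j : Fin 3, Disjoint (K (.inr (.inl j))) (closure (outerRegion (⋃ v, K v))) := by
  by_contra! hout
  simp only [not_disjoint_iff] at hout
  choose q hqK hq using hout
  choose p hp using fun v ↦ (hpath v).nonempty
  have hplane : 1 < Module.rank ℝ (ℝ × ℝ) := by simp [← Module.finrank_eq_rank]
  have hadj_of_inter (u v) (huv : u ≠ v) := (hadj u v huv).1
  have hunion : IsCompact (⋃ v, K v) := isCompact_iUnion hcompact
  obtain ⟨z, hz⟩ :=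
    (isPathConnected_outerRegion hplane hunion.isBounded hunion.isClosed).nonempty
  -- The complement of `away j` plays the edge from the contracted outer region to `j`.
  let away (j : Fin 3) : Set (ℝ × ℝ) := ⋃ v ∈ {v | Disjoint (K v) (K (.inr (.inl j)))}, K v
  have haway {i j j'} (hj : j ≠ j') : ⋃ v ∈ arm i j, K v ⊆ away j' := by
    obtain ⟨i', hi⟩ := exists_ne i
    exact biUnion_mono (fun v hv ↦
      disjoint_of_mem_arm hadj_of_inter hi.symm hj hv (by simp [arm])) fun _ _ ↦ subset_rfl
  let center : Option (Fin 2) → ℝ × ℝ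
    | none => z
    | some i => p (.inl i)
  let edge : Option (Fin 2) → Fin 3 → Set (ℝ × ℝ)
    | none, j => (away j)ᶜ
    | some i, j => ⋃ v ∈ arm i j, K v
  have hedge : ∀ i j, JoinedIn (edge i j) (center i) (q j)
    | none, j => joinedIn_compl_biUnion_disjoint hplane hcompact hz (hqK j) (hq j)
    | some i, j =>
      joinedIn_biUnion_arm hpath (fun u v h ↦ (hadj u v h.ne).2 h) (hp _) (hqK j)
  have hedge_disj : ∀ i i' j j', i ≠ i' → j ≠ j' → Disjoint (edge i j) (edge i' j')
    | none, none, _, _, hi, _ => absurd rfl hi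
    | none, some _, _, _, _, hj => disjoint_compl_left.mono_right (haway hj.symm)
    | some _, none, _, _, _, hj => disjoint_compl_right.mono_left (haway hj)
    | some _, some _, _, _, hi, hj => by
      simp only [edge, disjoint_iUnion_left, disjoint_iUnion_right]
      exact fun u hu v hv ↦ disjoint_of_mem_arm hadj_of_inter (ne_of_apply_ne some hi) hj hv hu
  obtain ⟨i, i', j, j', hi, hj, h⟩ := exists_not_disjoint_of_joinedIn (by simp) (by simp) hedge
  exact h (hedge_disj i i' j j' hi hj)

end SubdividedK23

theorem stmt_10_general :
    IsPartialTwoTree subdividedK23 ∧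
    ∀ K : Fin 2 ⊕ Fin 3 ⊕ Fin 2 × Fin 3 → Set (ℝ × ℝ),
      (∀ v, IsCompact (K v)) → (∀ v, IsPathConnected (K v)) →
      (∀ u v, u ≠ v → ((K u ∩ K v).Nonempty ↔ subdividedK23.Adj u v)) →
      ∃ j : Fin 3, Disjoint (K (.inr (.inl j))) (closure (outerRegion (⋃ v, K v))) :=
  ⟨isPartialTwoTree_subdividedK23, fun _ ↦ exists_disjoint_closure_outerRegion⟩

/-- The subdivided `K_{2,3}` is a partial 2-tree, but it has no outer-string representation:
there is no assignment of arcs to the vertices with images intersecting iff the vertices are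
adjacent, all intersections proper crossings, no triple points, and every arc having at least
one endpoint in the closure of the contour. -/
theorem stmt_10 :
    IsPartialTwoTree subdividedK23 ∧
    ¬ ∃ γ : (Fin 2 ⊕ Fin 3 ⊕ Fin 2 × Fin 3) → Arc,
        (∀ u v, u ≠ v →
          (((γ u).img ∩ (γ v).img).Nonempty ↔ subdividedK23.Adj u v)) ∧
        (∀ u v, u ≠ v → ∀ q ∈ (γ u).img ∩ (γ v).img,
          CrossesProperlyAt (γ u) (γ v) q) ∧
        (∀ u v w, u ≠ v → u ≠ w → v ≠ w →
          (γ u).img ∩ (γ v).img ∩ (γ w).img = ∅) ∧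
        (∀ v, (γ v).toFun 0 ∈ closure (contour γ) ∨
          (γ v).toFun 1 ∈ closure (contour γ)) := by
  obtain ⟨hpartial, hdisjoint⟩ := stmt_10_general
  refine ⟨hpartial, fun ⟨γ, hadj, _, _, hout⟩ ↦ ?_⟩
  obtain ⟨j, hj⟩ := hdisjoint (fun v ↦ (γ v).img) (fun v ↦ (γ v).isCompact_img)
    (fun v ↦ (γ v).isPathConnected_img) hadj
  exact (hout _).elim (disjoint_left.1 hj (γ _).toFun_zero_mem_img)
    (disjoint_left.1 hj (γ _).toFun_one_mem_img)
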